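/- Let n be a positive integer, let 𝒜 be a finite family of subsets of {1,…,n} such that every S ∈ 𝒜 is an interval (a set of consecutive integers), and fix f > 0. Define v^agg(x) = max{ f·y : y ∈ [0,1], ∑_{j∈S} x_j ≥ y for every S ∈ 𝒜 } for x ∈ [0,1]^n. Then the hypograph of v^agg over the unit cube satisfies {(x,θ) ∈ [0,1]^n × ℝ : θ ≤ f and θ ≤ f·∑_{j∈S} x_j for every S ∈ 𝒜} = conv{ (β, v^agg(β)) : β ∈ {0,1}^n } + { (0, r) : r ≤ 0 }, where the sum is a Minkowski sum. -/

import Mathlib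

open scoped Pointwise

/-- The real vector in `{0,1}^n` associated with a Boolean vector `β`. -/
def toVec {n : ℕ} (β : Fin n → Bool) : Fin n → ℝ := fun i => if β i then 1 else 0

/-- `v^agg(x) = max{ f·y : y ∈ [0,1], ∑_{j∈S} x_j ≥ y for every S ∈ 𝒜 }`. -/
noncomputable def vagg {N : Type*} (A : Finset (Finset N)) (f : ℝ) (x : N → ℝ) : ℝ :=
  sSup {t | ∃ y : ℝ, y ∈ Set.Icc (0 : ℝ) 1 ∧
    (∀ S ∈ A, y ≤ ∑ j ∈ S, x j) ∧ t = f * y}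

/-!
Sample a common threshold `u` uniformly in `[0, 1]` and replace every partial sum `P k` of `x` by
`⌊P k + u⌋`. In expectation nothing changes, while the sum over an interval, being a difference of
two partial sums, moves to its floor or its ceiling. So a point of the cube averages binary points
that still cover each interval it covers.

For a point `(x, θ)` of the hypograph with `0 < θ`, put `y = θ / f` and split `x = y w + (1 - y) z`
inside the cube with `w = min (1, x / y)`. The point `w` covers every set of `𝒜`, so `(w, f)` and
`(z, 0)` both lie in the hull, hence so does `(x, θ)`.
-/

section Hypograph

/-- The hypograph of `g` over `s`, written so that it unfolds to the set in
`ConcaveOn.convex_hypograph`. -/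
def hypographOn {E β : Type*} [LE β] (s : Set E) (g : E → β) : Set (E × β) :=
  {p | p.1 ∈ s ∧ p.2 ≤ g p.1}

variable {𝕜 E : Type*} [Field 𝕜] [LinearOrder 𝕜] [IsStrictOrderedRing 𝕜] [AddCommGroup E]

theorem image_graph_add_downwardRay (s : Set E) (g : E → 𝕜) :
    (fun x ↦ (x, g x)) '' s + {p : E × 𝕜 | p.1 = 0 ∧ p.2 ≤ 0} = hypographOn s g := by
  ext ⟨x, t⟩
  constructor
  · rintro ⟨_, ⟨y, hy, rfl⟩, ⟨_, r⟩, ⟨rfl, hr⟩, hsum⟩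
    obtain ⟨rfl, rfl⟩ : y = x ∧ g y + r = t := by simpa using hsum
    exact ⟨hy, add_le_of_nonpos_right hr⟩
  · rintro ⟨hx, ht⟩
    exact ⟨_, ⟨x, hx, rfl⟩, (0, t - g x), ⟨rfl, sub_nonpos.2 ht⟩, by simp⟩

variable [Module 𝕜 E] {s : Set E} {g : E → 𝕜}

theorem convex_downwardRay : Convex 𝕜 {p : E × 𝕜 | p.1 = 0 ∧ p.2 ≤ 0} :=
  (convex_singleton (0 : E)).prod (convex_Iic (0 : 𝕜))

theorem convexHull_image_graph_add_downwardRay (s : Set E) (g : E → 𝕜) :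
    convexHull 𝕜 ((fun x ↦ (x, g x)) '' s) + {p : E × 𝕜 | p.1 = 0 ∧ p.2 ≤ 0} =
      convexHull 𝕜 (hypographOn s g) := by
  rw [← image_graph_add_downwardRay, convexHull_add,
    (convex_downwardRay (𝕜 := 𝕜) (E := E)).convexHull_eq]

theorem prodMk_mem_convexHull_hypographOn {x : E} {t : 𝕜}
    (hx : x ∈ convexHull 𝕜 {y ∈ s | t ≤ g y}) : (x, t) ∈ convexHull 𝕜 (hypographOn s g) := by
  have hprod : (x, t) ∈ convexHull 𝕜 ({y ∈ s | t ≤ g y} ×ˢ {t}) := by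
    rw [convexHull_prod, convexHull_singleton]
    exact ⟨hx, rfl⟩
  refine convexHull_mono ?_ hprod
  rintro ⟨y, _⟩ ⟨hy, rfl⟩
  exact hy

end Hypograph

section CubeSplit

variable {𝕜 N : Type*} [Field 𝕜] [LinearOrder 𝕜] [IsStrictOrderedRing 𝕜] {x : N → 𝕜} {y : 𝕜}

theorem one_le_sum_min_one_div (hx : 0 ≤ x) (hy : 0 < y) {S : Finset N} (hS : y ≤ ∑ j ∈ S, x j) :
    1 ≤ ∑ j ∈ S, min 1 (x j / y) := by
  by_cases hlarge : ∃ j ∈ S, y ≤ x j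
  · obtain ⟨j, hj, hyj⟩ := hlarge
    calc (1 : 𝕜) = min 1 (x j / y) := (min_eq_left ((one_le_div hy).2 hyj)).symm
      _ ≤ ∑ j ∈ S, min 1 (x j / y) :=
        Finset.single_le_sum (f := fun j ↦ min 1 (x j / y))
          (fun i _ ↦ le_min zero_le_one (div_nonneg (hx i) hy.le)) hj
  · push Not at hlarge
    calc (1 : 𝕜) ≤ (∑ j ∈ S, x j) / y := (one_le_div hy).2 hS
      _ = ∑ j ∈ S, min 1 (x j / y) := by
        rw [Finset.sum_div]
        exact Finset.sum_congr rfl fun j hj ↦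
          (min_eq_right ((div_le_one hy).2 (hlarge j hj).le)).symm

theorem exists_eq_smul_add_smul_one_le_sum (hx : x ∈ Set.Icc 0 1) (hy₀ : 0 < y) (hy₁ : y ≤ 1) :
    ∃ w ∈ Set.Icc (0 : N → 𝕜) 1, ∃ z ∈ Set.Icc (0 : N → 𝕜) 1, x = y • w + (1 - y) • z ∧
      ∀ S : Finset N, y ≤ ∑ j ∈ S, x j → 1 ≤ ∑ j ∈ S, w j := by
  have hy₂ : 0 ≤ 1 - y := sub_nonneg.2 hy₁
  have hrest : ∀ i, x i - min y (x i) ≤ 1 - y := fun i ↦ by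
    rcases min_cases y (x i) with ⟨h, -⟩ | ⟨h, -⟩ <;> rw [h] <;> linarith [show x i ≤ 1 from hx.2 i]
  have hrest₀ : ∀ i, 0 ≤ x i - min y (x i) := fun i ↦ sub_nonneg.2 (min_le_right _ _)
  refine ⟨fun i ↦ min 1 (x i / y),
    ⟨fun i ↦ le_min zero_le_one (div_nonneg (hx.1 i) hy₀.le), fun i ↦ min_le_left _ _⟩,
    fun i ↦ (x i - min y (x i)) / (1 - y),
    ⟨fun i ↦ div_nonneg (hrest₀ i) hy₂, fun i ↦ div_le_one_of_le₀ (hrest i) hy₂⟩,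
    funext fun i ↦ ?_, fun S ↦ one_le_sum_min_one_div hx.1 hy₀⟩
  -- The case `y = 1`, where the denominator vanishes, is harmless: the numerator vanishes too.
  have hz : (1 - y) * ((x i - min y (x i)) / (1 - y)) = x i - min y (x i) :=
    mul_div_cancel_of_imp' fun h ↦ le_antisymm (h ▸ hrest i) (hrest₀ i)
  have hw : y * min 1 (x i / y) = min y (x i) := by
    rw [mul_min_of_nonneg _ _ hy₀.le, mul_one, mul_div_cancel₀ _ hy₀.ne']
  simp only [Pi.add_apply, Pi.smul_apply, smul_eq_mul, hw, hz, add_sub_cancel]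

end CubeSplit

section RandomShift

open MeasureTheory

theorem intervalIntegrable_floor_add (p a b : ℝ) :
    IntervalIntegrable (fun u ↦ (⌊p + u⌋ : ℝ)) volume a b :=
  Monotone.intervalIntegrable fun _ _ h ↦ Int.cast_le.2 (Int.floor_le_floor (by gcongr))

theorem integral_floor_zero_one : ∫ u in (0 : ℝ)..1, (⌊u⌋ : ℝ) = 0 := by
  rw [intervalIntegral.integral_congr_Ioo_of_le (g := fun _ ↦ 0) zero_le_one fun u hu ↦ ?_]
  · simp
  · simp [Int.floor_eq_zero_iff.2 (Set.Ioo_subset_Ico_self hu)]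

theorem integral_floor_add (p : ℝ) : ∫ u in (0 : ℝ)..1, (⌊p + u⌋ : ℝ) = p := by
  have hsplit : ∀ q : ℝ, ∫ u in (0 : ℝ)..1, Int.fract (q + u) =
      q + 1 / 2 - ∫ u in (0 : ℝ)..1, (⌊q + u⌋ : ℝ) := fun q ↦ by
    simp only [Int.fract]
    rw [intervalIntegral.integral_sub (Continuous.intervalIntegrable (by fun_prop) 0 1)
        (intervalIntegrable_floor_add q 0 1), intervalIntegral.integral_add (by simp) (by simp)]
    simp
  have hperiodic : ∫ u in (0 : ℝ)..1, Int.fract (p + u) = ∫ u in (0 : ℝ)..1, Int.fract (0 + u) := by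
    simpa using (Int.fract_periodic ℝ).intervalIntegral_add_eq p 0
  rw [hsplit, hsplit] at hperiodic
  simp only [zero_add, integral_floor_zero_one] at hperiodic
  linarith

variable {ι : Type*} [Finite ι]

theorem finite_image_floor_add (p : ι → ℝ) :
    ((fun (u : ℝ) i ↦ (⌊p i + u⌋ : ℝ)) '' Set.Icc 0 1).Finite := by
  have hfin : (Set.univ.pi fun i ↦ ((↑) : ℤ → ℝ) '' Set.Icc ⌊p i⌋ ⌊p i + 1⌋).Finite :=
    Set.Finite.pi fun i ↦ (Set.finite_Icc _ _).image _
  refine hfin.subset ?_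
  rintro _ ⟨u, hu, rfl⟩ i -
  exact ⟨_, ⟨Int.floor_le_floor (by linarith [hu.1]), Int.floor_le_floor (by linarith [hu.2])⟩, rfl⟩

theorem mem_convexHull_image_floor_add (p : ι → ℝ) :
    p ∈ convexHull ℝ ((fun (u : ℝ) i ↦ (⌊p i + u⌋ : ℝ)) '' Set.Icc 0 1) := by
  have := Fintype.ofFinite ι
  let μ : Measure ℝ := volume.restrict (Set.Ioc 0 1)
  have : IsProbabilityMeasure μ := ⟨by simp [μ]⟩
  have hint : ∀ i, Integrable (fun u ↦ (⌊p i + u⌋ : ℝ)) μ := fun i ↦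
    (intervalIntegrable_iff_integrableOn_Ioc_of_le zero_le_one).1
      (intervalIntegrable_floor_add (p i) 0 1)
  have hmean : ∫ u, (fun i ↦ (⌊p i + u⌋ : ℝ)) ∂μ = p := funext fun i ↦ by
    rw [eval_integral hint, ← intervalIntegral.integral_of_le zero_le_one, integral_floor_add]
  have hmem : ∀ᵐ u ∂μ, (fun i ↦ (⌊p i + u⌋ : ℝ)) ∈
      convexHull ℝ ((fun (u : ℝ) i ↦ (⌊p i + u⌋ : ℝ)) '' Set.Icc 0 1) :=
    (ae_restrict_mem measurableSet_Ioc).mono fun u hu ↦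
      subset_convexHull ℝ _ ⟨u, Set.Ioc_subset_Icc_self hu, rfl⟩
  have hmean_mem := (convex_convexHull ℝ _).integral_mem
    ((finite_image_floor_add p).isClosed_convexHull ℝ) hmem (Integrable.of_eval hint)
  rwa [hmean] at hmean_mem

end RandomShift

section IntervalRounding

variable {n : ℕ} {x : Fin n → ℝ} {r : Fin n → ℤ}

/-- `r` is an interval rounding of `x` if it rounds every sum of consecutive entries of `x`, in
particular every single entry, up or down. -/
def IsIntervalRounding (x : Fin n → ℝ) (r : Fin n → ℤ) : Prop :=
  ∀ S : Finset (Fin n), (S : Set (Fin n)).OrdConnected →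
    ∑ j ∈ S, r j ∈ Set.Icc ⌊∑ j ∈ S, x j⌋ ⌈∑ j ∈ S, x j⌉

theorem floor_add_sub_floor_add_mem_Icc {R : Type*} [Ring R] [LinearOrder R] [IsStrictOrderedRing R]
    [FloorRing R] (p q u : R) : ⌊q + u⌋ - ⌊p + u⌋ ∈ Set.Icc ⌊q - p⌋ ⌈q - p⌉ := by
  rw [show q + u = q - p + (p + u) by abel]
  constructor
  · rw [le_sub_iff_add_le]
    exact Int.le_floor_add _ _
  · rw [sub_le_iff_le_add, ← Int.floor_intCast_add]
    exact Int.floor_le_floor (by gcongr; exact Int.le_ceil _)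

theorem Icc_min'_max'_eq_of_ordConnected {α : Type*} [LinearOrder α] [LocallyFiniteOrder α]
    {S : Finset α} (hS : (S : Set α).OrdConnected) (hne : S.Nonempty) :
    Finset.Icc (S.min' hne) (S.max' hne) = S := by
  ext c
  rw [Finset.mem_Icc]
  exact ⟨fun hc ↦ hS.out (S.min'_mem hne) (S.max'_mem hne) hc,
    fun hc ↦ ⟨S.min'_le c hc, S.le_max' c hc⟩⟩

theorem isIntervalRounding_floor_add_sub (P : Fin (n + 1) → ℝ) (u : ℝ) :
    IsIntervalRounding (fun j ↦ P j.succ - P j.castSucc)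
      fun j ↦ ⌊P j.succ + u⌋ - ⌊P j.castSucc + u⌋ := by
  intro S hS
  rcases S.eq_empty_or_nonempty with rfl | hne
  · simp
  · have hle : S.min' hne ≤ S.max' hne := S.min'_le_max' hne
    rw [← Icc_min'_max'_eq_of_ordConnected hS hne, Fin.sum_Icc_sub hle P,
      Fin.sum_Icc_sub hle fun k ↦ ⌊P k + u⌋]
    exact floor_add_sub_floor_add_mem_Icc _ _ u

theorem mem_convexHull_isIntervalRounding (x : Fin n → ℝ) :
    x ∈ convexHull ℝ ((fun r i ↦ (r i : ℝ)) '' {r | IsIntervalRounding x r}) := by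
  let D : (Fin (n + 1) → ℝ) →ₗ[ℝ] Fin n → ℝ :=
    LinearMap.funLeft ℝ ℝ Fin.succ - LinearMap.funLeft ℝ ℝ Fin.castSucc
  have hD : D (Fin.partialSum x) = x := funext fun j ↦ by simp [D, Fin.partialSum_succ]
  have hmem := Set.mem_image_of_mem D (mem_convexHull_image_floor_add (Fin.partialSum x))
  rw [D.image_convexHull, hD] at hmem
  refine convexHull_mono ?_ hmem
  rintro _ ⟨_, ⟨u, -, rfl⟩, rfl⟩
  have hround := isIntervalRounding_floor_add_sub (Fin.partialSum x) u
  rw [show (fun j ↦ Fin.partialSum x j.succ - Fin.partialSum x j.castSucc) = x from hD] at hround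
  exact ⟨_, hround, funext fun j ↦ by simp [D]⟩

theorem IsIntervalRounding.mem_Icc_zero_one (hr : IsIntervalRounding x r) (hx : x ∈ Set.Icc 0 1) :
    r ∈ Set.Icc 0 1 := by
  have hentry : ∀ j, r j ∈ Set.Icc ⌊x j⌋ ⌈x j⌉ := fun j ↦ by
    simpa using hr {j} (by simpa using Set.ordConnected_singleton)
  exact ⟨fun j ↦ (Int.floor_nonneg.2 (hx.1 j)).trans (hentry j).1,
    fun j ↦ (hentry j).2.trans (Int.ceil_le.2 (by simpa using hx.2 j))⟩

theorem IsIntervalRounding.one_le_sum (hr : IsIntervalRounding x r) {S : Finset (Fin n)}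
    (hS : (S : Set (Fin n)).OrdConnected) (hsum : 1 ≤ ∑ j ∈ S, x j) : 1 ≤ ∑ j ∈ S, r j :=
  (Int.le_floor.2 (by simpa using hsum)).trans (hr S hS).1

end IntervalRounding

section BinaryPoints

variable {n : ℕ}

theorem toVec_mem_Icc (β : Fin n → Bool) : toVec β ∈ Set.Icc 0 1 := by
  constructor <;> intro i <;> cases h : β i <;> simp [toVec, h]

theorem intCast_mem_range_toVec {r : Fin n → ℤ} (hr : r ∈ Set.Icc 0 1) :
    (fun i ↦ (r i : ℝ)) ∈ Set.range toVec := by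
  refine ⟨fun i ↦ decide (r i = 1), funext fun i ↦ ?_⟩
  have h₀ : 0 ≤ r i := hr.1 i
  have h₁ : r i ≤ 1 := hr.2 i
  rcases (by lia : r i = 0 ∨ r i = 1) with h | h <;> simp [toVec, h]

theorem mem_convexHull_range_toVec_one_le_sum {x : Fin n → ℝ} (hx : x ∈ Set.Icc 0 1) :
    x ∈ convexHull ℝ {w ∈ Set.range toVec | ∀ S : Finset (Fin n),
      (S : Set (Fin n)).OrdConnected → 1 ≤ ∑ j ∈ S, x j → 1 ≤ ∑ j ∈ S, w j} := by
  refine convexHull_mono ?_ (mem_convexHull_isIntervalRounding x)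
  rintro _ ⟨r, hr, rfl⟩
  refine ⟨intCast_mem_range_toVec (hr.mem_Icc_zero_one hx), fun S hS hsum ↦ ?_⟩
  beta_reduce
  exact_mod_cast hr.one_le_sum hS hsum

end BinaryPoints

section Vagg

variable {N : Type*} {A : Finset (Finset N)} {f : ℝ}

theorem le_vagg_iff (hf : 0 < f) {x : N → ℝ} (hx : 0 ≤ x) {θ : ℝ} :
    θ ≤ vagg A f x ↔ θ ≤ f ∧ ∀ S ∈ A, θ ≤ f * ∑ j ∈ S, x j := by
  have hsum : ∀ S : Finset N, 0 ≤ ∑ j ∈ S, x j := fun S ↦ Finset.sum_nonneg fun i _ ↦ hx i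
  constructor
  · intro hθ
    have hle : ∀ c, (∀ y ≤ 1, (∀ S ∈ A, y ≤ ∑ j ∈ S, x j) → f * y ≤ c) → θ ≤ c := fun c hc ↦ by
      refine hθ.trans (csSup_le ⟨f * 0, 0, by simp, fun S _ ↦ hsum S, rfl⟩ ?_)
      rintro _ ⟨y, hy, hyS, rfl⟩
      exact hc y hy.2 hyS
    exact ⟨hle f fun y hy _ ↦ mul_le_of_le_one_right hf.le hy,
      fun S hS ↦ hle _ fun y _ hyS ↦ mul_le_mul_of_nonneg_left (hyS S hS) hf.le⟩
  · rintro ⟨hθf, hθS⟩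
    have hbdd : BddAbove {t | ∃ y : ℝ, y ∈ Set.Icc (0 : ℝ) 1 ∧
        (∀ S ∈ A, y ≤ ∑ j ∈ S, x j) ∧ t = f * y} := by
      refine ⟨f, ?_⟩
      rintro _ ⟨y, hy, -, rfl⟩
      exact mul_le_of_le_one_right hf.le hy.2
    calc θ ≤ f * max 0 (θ / f) := (div_le_iff₀' hf).1 (le_max_right _ _)
      _ ≤ vagg A f x := le_csSup hbdd
        ⟨_, ⟨le_max_left _ _, max_le zero_le_one ((div_le_one hf).2 hθf)⟩,
          fun S hS ↦ max_le (hsum S) ((div_le_iff₀' hf).2 (hθS S hS)), rfl⟩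

theorem concaveOn_vagg (hf : 0 < f) : ConcaveOn ℝ (Set.Ici 0) (vagg A f : (N → ℝ) → ℝ) := by
  refine ⟨convex_Ici 0, fun x hx z hz a b ha hb hab ↦ ?_⟩
  obtain ⟨hxf, hxS⟩ := (le_vagg_iff (A := A) hf hx).1 le_rfl
  obtain ⟨hzf, hzS⟩ := (le_vagg_iff (A := A) hf hz).1 le_rfl
  refine (le_vagg_iff hf (convex_Ici 0 hx hz ha hb hab)).2
    ⟨convex_Iic f hxf hzf ha hb hab, fun S hS ↦ ?_⟩
  calc a • vagg A f x + b • vagg A f z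
      ≤ a • (f * ∑ j ∈ S, x j) + b • (f * ∑ j ∈ S, z j) := by
        gcongr
        exacts [hxS S hS, hzS S hS]
    _ = f * ∑ j ∈ S, (a • x + b • z) j := by
        simp only [Pi.add_apply, Pi.smul_apply, smul_eq_mul, Finset.sum_add_distrib,
          ← Finset.mul_sum]
        ring

theorem hypographOn_Icc_vagg (hf : 0 < f) :
    hypographOn (Set.Icc 0 1) (vagg A f) =
      {p : (N → ℝ) × ℝ | (∀ i, p.1 i ∈ Set.Icc (0 : ℝ) 1) ∧ p.2 ≤ f ∧
        ∀ S ∈ A, p.2 ≤ f * ∑ j ∈ S, p.1 j} := by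
  ext p
  have hcube : p.1 ∈ Set.Icc 0 1 ↔ ∀ i, p.1 i ∈ Set.Icc (0 : ℝ) 1 := forall_and.symm
  exact (and_congr_right fun hp ↦ le_vagg_iff hf hp.1).trans (and_congr_left' hcube)

end Vagg

section BinaryHypograph

variable {n : ℕ} {A : Finset (Finset (Fin n))} {f : ℝ} {x : Fin n → ℝ}

theorem mem_convexHull_hypographOn_of_nonpos (hf : 0 < f) (hx : x ∈ Set.Icc 0 1) {θ : ℝ}
    (hθ : θ ≤ 0) : (x, θ) ∈ convexHull ℝ (hypographOn (Set.range toVec) (vagg A f)) := by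
  refine prodMk_mem_convexHull_hypographOn
    (convexHull_mono ?_ (mem_convexHull_range_toVec_one_le_sum hx))
  rintro _ ⟨⟨β, rfl⟩, -⟩
  have hβ := (toVec_mem_Icc β).1
  exact ⟨⟨β, rfl⟩, (le_vagg_iff hf hβ).2 ⟨hθ.trans hf.le,
    fun S _ ↦ hθ.trans (mul_nonneg hf.le (Finset.sum_nonneg fun i _ ↦ hβ i))⟩⟩

theorem mem_convexHull_hypographOn_of_one_le_sum
    (hA : ∀ S ∈ A, (S : Set (Fin n)).OrdConnected) (hf : 0 < f) (hx : x ∈ Set.Icc 0 1)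
    (hsum : ∀ S ∈ A, 1 ≤ ∑ j ∈ S, x j) :
    (x, f) ∈ convexHull ℝ (hypographOn (Set.range toVec) (vagg A f)) := by
  refine prodMk_mem_convexHull_hypographOn
    (convexHull_mono ?_ (mem_convexHull_range_toVec_one_le_sum hx))
  rintro _ ⟨⟨β, rfl⟩, hβ⟩
  exact ⟨⟨β, rfl⟩, (le_vagg_iff hf (toVec_mem_Icc β).1).2 ⟨le_rfl,
    fun S hS ↦ le_mul_of_one_le_right hf.le (hβ S (hA S hS) (hsum S hS))⟩⟩

theorem hypographOn_Icc_subset_convexHull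
    (hA : ∀ S ∈ A, (S : Set (Fin n)).OrdConnected) (hf : 0 < f) :
    hypographOn (Set.Icc 0 1) (vagg A f) ⊆
      convexHull ℝ (hypographOn (Set.range toVec) (vagg A f)) := by
  rintro ⟨x, θ⟩ ⟨hx, hθ⟩
  rcases le_or_gt θ 0 with hθ₀ | hθ₀
  · exact mem_convexHull_hypographOn_of_nonpos hf hx hθ₀
  obtain ⟨hθf, hθS⟩ := (le_vagg_iff hf hx.1).1 hθ
  have hy₀ : 0 < θ / f := div_pos hθ₀ hf
  have hy₁ : θ / f ≤ 1 := (div_le_one hf).2 hθf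
  obtain ⟨w, hw, z, hz, hsplit, hcover⟩ := exists_eq_smul_add_smul_one_le_sum hx hy₀ hy₁
  have hwf := mem_convexHull_hypographOn_of_one_le_sum hA hf hw fun S hS ↦
    hcover S ((div_le_iff₀' hf).2 (hθS S hS))
  have hz₀ := mem_convexHull_hypographOn_of_nonpos (A := A) hf hz le_rfl
  have hcomb := convex_convexHull ℝ _ hwf hz₀ hy₀.le (sub_nonneg.2 hy₁) (add_sub_cancel _ _)
  simpa [← hsplit, hf.ne'] using hcomb

theorem hypographOn_Icc_eq_convexHull
    (hA : ∀ S ∈ A, (S : Set (Fin n)).OrdConnected) (hf : 0 < f) :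
    hypographOn (Set.Icc 0 1) (vagg A f) =
      convexHull ℝ (hypographOn (Set.range toVec) (vagg A f)) := by
  refine (hypographOn_Icc_subset_convexHull hA hf).antisymm (convexHull_min ?_ ?_)
  · rintro ⟨_, θ⟩ ⟨⟨β, rfl⟩, hθ⟩
    exact ⟨toVec_mem_Icc β, hθ⟩
  · exact ((concaveOn_vagg hf).subset Set.Icc_subset_Ici_self (convex_Icc 0 1)).convex_hypograph

end BinaryHypograph

/-- step in the proof of Proposition 3(iii) of the paper.
If every set of the family `𝒜` of subsets of `{1,…,n}` (modelled as `Fin n`) is an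
interval, then the hypograph of `v^agg` over the unit cube,
`{(x,θ) ∈ [0,1]^n × ℝ : θ ≤ f and θ ≤ f·∑_{j∈S} x_j for every S ∈ 𝒜}`, equals the
Minkowski sum of the convex hull of `{(β, v^agg(β)) : β ∈ {0,1}^n}` and the downward
ray `{(0, r) : r ≤ 0}`. -/
theorem stmt_12 (n : ℕ) (hn : 0 < n) (A : Finset (Finset (Fin n)))
    (hA : ∀ S ∈ A, ∀ a ∈ S, ∀ b ∈ S, ∀ c : Fin n, a ≤ c → c ≤ b → c ∈ S)
    (f : ℝ) (hf : 0 < f) :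
    {p : (Fin n → ℝ) × ℝ | (∀ i, p.1 i ∈ Set.Icc (0 : ℝ) 1) ∧ p.2 ≤ f ∧
        ∀ S ∈ A, p.2 ≤ f * ∑ j ∈ S, p.1 j} =
      convexHull ℝ (Set.range fun β : Fin n → Bool => (toVec β, vagg A f (toVec β)))
        + {p : (Fin n → ℝ) × ℝ | p.1 = 0 ∧ p.2 ≤ 0} := by
  have hA' : ∀ S ∈ A, (S : Set (Fin n)).OrdConnected := fun S hS ↦
    ⟨fun a ha b hb c hc ↦ hA S hS a ha b hb c hc.1 hc.2⟩
  rw [← hypographOn_Icc_vagg hf, hypographOn_Icc_eq_convexHull hA' hf,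
    ← convexHull_image_graph_add_downwardRay, ← Set.range_comp]
  rfl
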